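/- Let G be a graph and x, y two distinct vertices of G. Suppose G + xy is 2-connected, every vertex of G other than x and y has degree at least 3 in G, and G - x is triangle-free. Then G contains two (x,y)-paths P1, P2 with lengths satisfying ||P1|| = ||P2|| + 2 and ||P2|| ≥ 2. -/

import Mathlib

open SimpleGraph

/-- `G` is `k`-connected: more than `k` vertices, and deleting any set of fewer than
`k` vertices leaves a connected graph. -/
def KConnected {V : Type*} (G : SimpleGraph V) (k : ℕ) : Prop :=
  k < Nat.card V ∧ ∀ S : Set V, S.Finite → S.ncard < k → (G.induce Sᶜ).Connected

/-- `G + xy`: the graph `G` with the edge `xy` added (equal to `G` if already present). -/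
def AddEdge {V : Type*} (G : SimpleGraph V) (x y : V) : SimpleGraph V :=
  G ⊔ SimpleGraph.fromEdgeSet {s(x, y)}

/-- `G` has a cycle of length `n`. -/
def HasCycleLength {V : Type*} (G : SimpleGraph V) (n : ℕ) : Prop :=
  ∃ (v : V) (c : G.Walk v v), c.IsCycle ∧ c.length = n

/-- `G` contains `k` cycles of consecutive lengths. -/
def HasConsecCycles {V : Type*} (G : SimpleGraph V) (k : ℕ) : Prop :=
  ∃ m : ℕ, ∀ i < k, HasCycleLength G (m + i)

/-!
Induct on the number of vertices. Suppose first that some `c` has two common neighbours with `x`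
other than `y`, and let `D` be the component of `y` after deleting `x`, `c` and all these common
neighbours. If one of them, `p`, is joined to `D`, then a path `x p ⋯ y` through `D` and its detour
`x q c p ⋯ y`, with `q` another common neighbour, are nice. Otherwise `{x, c}` separates `D` from
the common neighbours; apply induction to `G - D` with roots `x` and `c`, and continue from `c` to
`y` through `D`.

Suppose now that there is no such `c`. Contracting neighbours of `x` onto `x` then does not lower
the degrees of the remaining vertices. Near `y` there is a short path (`y`, or `a y`, or `b a y`)
ending at a vertex `r` which alone on the path has neighbours at distance at least 2 from `x`; in
the third case triangle-freeness shows that `b` has one. Apply induction to the contracted graph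
with roots `x` and `r`. Replacing the first edge `xv` of a path by `x a v`, with `a` a neighbour of
`x`, lengthens both paths by 1, and appending the path from `r` to `y` makes them `(x,y)`-paths.
-/

/-- There is an `(a,b)`-path of length `n` in `G[U]`. Paths of induced subgraphs are kept as paths
of `G`, which avoids subtypes. -/
def HasPathOn {V : Type*} (G : SimpleGraph V) (U : Set V) (a b : V) (n : ℕ) : Prop :=
  ∃ p : G.Walk a b, p.IsPath ∧ p.length = n ∧ ∀ v ∈ p.support, v ∈ U

namespace HasPathOn

variable {V : Type*} {G : SimpleGraph V} {U W : Set V} {a b c : V} {m n : ℕ}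

theorem left_mem (h : HasPathOn G U a b n) : a ∈ U := by
  obtain ⟨p, -, -, hpU⟩ := h
  exact hpU a p.start_mem_support

theorem right_mem (h : HasPathOn G U a b n) : b ∈ U := by
  obtain ⟨p, -, -, hpU⟩ := h
  exact hpU b p.end_mem_support

theorem refl (ha : a ∈ U) : HasPathOn G U a a 0 :=
  ⟨.nil, .nil, rfl, by simpa using ha⟩

theorem mono (h : HasPathOn G U a b n) (hUW : U ⊆ W) : HasPathOn G W a b n := by
  obtain ⟨p, hp, hn, hpU⟩ := h
  exact ⟨p, hp, hn, fun v hv => hUW (hpU v hv)⟩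

theorem transfer {G' : SimpleGraph V} (h : HasPathOn G U a b n)
    (hGG' : ∀ u ∈ U, ∀ v ∈ U, G.Adj u v → G'.Adj u v) : HasPathOn G' U a b n := by
  obtain ⟨p, hp, hn, hpU⟩ := h
  have hedges : ∀ e ∈ p.edges, e ∈ G'.edgeSet := by
    rintro ⟨u, v⟩ he
    exact hGG' u (hpU u (p.fst_mem_support_of_mem_edges he)) v
      (hpU v (p.snd_mem_support_of_mem_edges he)) (p.adj_of_mem_edges he)
  exact ⟨p.transfer G' hedges, hp.transfer hedges, by simpa using hn, by simpa using hpU⟩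

theorem cons (h : HasPathOn G U b c n) (hab : G.Adj a b) (ha : a ∉ U) :
    HasPathOn G (insert a U) a c (n + 1) := by
  obtain ⟨p, hp, hn, hpU⟩ := h
  refine ⟨.cons hab p, hp.cons fun hap => ha (hpU a hap), by simp [hn], ?_⟩
  simpa using fun v hv => Or.inr (hpU v hv)

theorem exists_adj_of_ne (h : HasPathOn G U a c n) (hac : a ≠ c) :
    ∃ b m, n = m + 1 ∧ G.Adj a b ∧ HasPathOn G (U \ {a}) b c m := by
  obtain ⟨p, hp, rfl, hpU⟩ := h
  cases p with
  | nil => exact absurd rfl hac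
  | cons hab p =>
    rw [Walk.cons_isPath_iff] at hp
    refine ⟨_, p.length, rfl, hab, p, hp.1, rfl, fun v hv => ⟨hpU v (by simp [hv]), ?_⟩⟩
    rintro rfl
    exact hp.2 hv

theorem append (h : HasPathOn G U a b n) (h' : HasPathOn G W b c m) (hUW : U ∩ W ⊆ {b}) :
    HasPathOn G (U ∪ W) a c (n + m) := by
  obtain ⟨p, hp, rfl, hpU⟩ := h
  obtain ⟨q, hq, rfl, hqW⟩ := h'
  refine ⟨p.append q, ?_, Walk.length_append p q, fun v hv => ?_⟩
  · rw [Walk.isPath_def, Walk.support_append, List.nodup_append']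
    refine ⟨hp.support_nodup, hq.support_nodup.tail, fun v hvp hvq => ?_⟩
    have hb : b ∉ q.support.tail :=
      (List.nodup_cons.1 (q.cons_tail_support.symm ▸ hq.support_nodup)).1
    have hvb : v = b := hUW ⟨hpU v hvp, hqW v (List.mem_of_mem_tail hvq)⟩
    exact hb (hvb ▸ hvq)
  · exact ((Walk.mem_support_append_iff p q).1 hv).imp (hpU v) (hqW v)

theorem exists_adj_of_mem_of_notMem {S : Set V} (h : HasPathOn G U a b n) (ha : a ∈ S)
    (hb : b ∉ S) : ∃ u ∈ S, ∃ v ∈ U \ S, G.Adj u v := by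
  obtain ⟨p, -, -, hpU⟩ := h
  obtain ⟨d, hd, hdS, hdS'⟩ := p.exists_boundary_dart S ha hb
  exact ⟨d.fst, hdS, d.snd, ⟨hpU _ (p.dart_snd_mem_support_of_mem_darts hd), hdS'⟩, d.adj⟩

end HasPathOn

/-- The vertex set of the component of `G[W]` containing `r`; it is empty if `r ∉ W`. -/
def componentIn {V : Type*} (G : SimpleGraph V) (W : Set V) (r : V) : Set V :=
  {v | ∃ p : G.Walk v r, ∀ u ∈ p.support, u ∈ W}

section componentIn

variable {V : Type*} {G : SimpleGraph V} {W : Set V} {r u v : V}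

theorem componentIn_subset : componentIn G W r ⊆ W :=
  fun v ⟨p, hp⟩ => hp v p.start_mem_support

theorem self_mem_componentIn (hr : r ∈ W) : r ∈ componentIn G W r :=
  ⟨.nil, by simpa using hr⟩

theorem mem_componentIn_of_adj (hv : v ∈ componentIn G W r) (hu : u ∈ W) (huv : G.Adj u v) :
    u ∈ componentIn G W r := by
  obtain ⟨p, hp⟩ := hv
  exact ⟨.cons huv p, by simpa using ⟨hu, hp⟩⟩

theorem exists_hasPathOn_componentIn (hv : v ∈ componentIn G W r) :
    ∃ n, HasPathOn G (componentIn G W r) v r n := by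
  classical
  obtain ⟨p, hp⟩ := hv
  refine ⟨_, p.bypass, p.bypass_isPath, rfl, fun u hu => ?_⟩
  have hup := p.support_bypass_subset_support hu
  exact ⟨p.dropUntil u hup, fun w hw => hp w (p.support_dropUntil_subset_support hup hw)⟩

end componentIn

/-- `G[U]` contains two nice `(x,y)`-paths, of lengths `n` and `n + 2` with `2 ≤ n`. -/
def HasNicePaths {V : Type*} (G : SimpleGraph V) (U : Set V) (x y : V) : Prop :=
  ∃ n, 2 ≤ n ∧ HasPathOn G U x y n ∧ HasPathOn G U x y (n + 2)

namespace HasNicePaths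

variable {V : Type*} {G : SimpleGraph V} {U W D : Set V} {c d p q x y z : V} {m : ℕ}

theorem mono (h : HasNicePaths G U x y) (hUW : U ⊆ W) : HasNicePaths G W x y := by
  obtain ⟨n, hn, h₁, h₂⟩ := h
  exact ⟨n, hn, h₁.mono hUW, h₂.mono hUW⟩

theorem append (h : HasNicePaths G U x y) (h' : HasPathOn G W y z m) (hUW : U ∩ W ⊆ {y}) :
    HasNicePaths G (U ∪ W) x z := by
  obtain ⟨n, hn, h₁, h₂⟩ := h
  exact ⟨n + m, by omega, h₁.append h' hUW, Nat.add_right_comm n 2 m ▸ h₂.append h' hUW⟩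

theorem of_commonNeighbors (hp : p ∈ G.commonNeighbors x c) (hq : q ∈ G.commonNeighbors x c)
    (hpq : p ≠ q) (hxc : x ≠ c) (hpd : G.Adj p d) (hD : HasPathOn G D d y m)
    (hdisj : Disjoint {x, q, c, p} D) : HasNicePaths G ({x, q, c, p} ∪ D) x y := by
  simp only [Set.disjoint_insert_left, Set.disjoint_singleton_left] at hdisj
  obtain ⟨hxD, hqD, hcD, hpD⟩ := hdisj
  obtain ⟨hxp, hcp⟩ := hp
  obtain ⟨hxq, hcq⟩ := hq
  have hp_path := hD.cons hpd hpD
  have hshort : HasPathOn G (insert x (insert p D)) x y (m + 2) :=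
    hp_path.cons hxp (by simp [hxD, hxp.ne])
  have hc_path := hp_path.cons hcp (by simp [hcD, hcp.ne])
  have hq_path := hc_path.cons hcq.symm (by simp [hqD, hpq.symm, hcq.ne.symm])
  have hlong := hq_path.cons hxq (by simp [hxD, hxc, hxq.ne, hxp.ne])
  refine ⟨m + 2, by omega, hshort.mono ?_, hlong.mono ?_⟩ <;> grind

end HasNicePaths

/-- The hypotheses of the theorem for the graph `G[U]` with roots `x` and `y`. That `G[U] + xy` is
2-connected is expressed by `exists_inner` and `exists_attachment`: for every vertex `w`, a nonempty
set `S` avoiding both roots is joined by an edge to a vertex outside `S ∪ {w}`. -/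
structure IsRooted {V : Type*} (G : SimpleGraph V) (U : Set V) (x y : V) : Prop where
  left_mem : x ∈ U
  right_mem : y ∈ U
  ne : x ≠ y
  exists_inner : (U \ {x, y}).Nonempty
  exists_attachment : ∀ S ⊆ U \ {x, y}, S.Nonempty → ∀ w, ∃ s ∈ S, ∃ v ∈ U \ S, v ≠ w ∧ G.Adj s v
  three_le_degree : ∀ v ∈ U \ {x, y}, 3 ≤ (U ∩ G.neighborSet v).encard
  cliqueFreeOn : G.CliqueFreeOn (U \ {x}) 3

theorem exists_ne_ne_of_three_le_encard {α : Type*} {s : Set α} (hs : 3 ≤ s.encard) (p q : α) :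
    ∃ u ∈ s, u ≠ p ∧ u ≠ q := by
  by_contra! h
  have hsub : s ⊆ {p, q} := fun u hu => or_iff_not_imp_left.2 (h u hu)
  have hle : s.encard ≤ 2 := (Set.encard_le_encard hsub).trans <|
    (Set.encard_insert_le _ _).trans (by rw [Set.encard_singleton]; rfl)
  exact absurd (hs.trans hle) (by decide)

namespace IsRooted

variable {V : Type*} {G : SimpleGraph V} {U : Set V} {x y v : V}

theorem exists_adj_ne_ne (hG : IsRooted G U x y) (hv : v ∈ U) (hvx : v ≠ x) (hvy : v ≠ y)
    (p q : V) : ∃ u ∈ U, G.Adj v u ∧ u ≠ p ∧ u ≠ q := by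
  obtain ⟨u, ⟨hu, hvu⟩, hup, huq⟩ :=
    exists_ne_ne_of_three_le_encard (hG.three_le_degree v ⟨hv, by simp [hvx, hvy]⟩) p q
  exact ⟨u, hu, hvu, hup, huq⟩

theorem exists_left_adj (hG : IsRooted G U x y) : ∃ s ∈ U, s ≠ y ∧ G.Adj x s := by
  obtain ⟨s, hs, v, hv, hvy, hsv⟩ := hG.exists_attachment _ subset_rfl hG.exists_inner y
  have hvx : v = x := by grind
  exact ⟨s, hs.1, fun h => hs.2 (Or.inr h), hvx ▸ hsv.symm⟩

theorem exists_right_adj (hG : IsRooted G U x y) : ∃ s ∈ U, s ≠ x ∧ G.Adj y s := by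
  obtain ⟨s, hs, v, hv, hvx, hsv⟩ := hG.exists_attachment _ subset_rfl hG.exists_inner x
  have hvy : v = y := by grind
  exact ⟨s, hs.1, fun h => hs.2 (Or.inl h), hvy ▸ hsv.symm⟩

theorem not_adj_of_adj_of_adj {a b c : V} (hG : IsRooted G U x y) (ha : a ∈ U \ {x})
    (hb : b ∈ U \ {x}) (hc : c ∈ U \ {x}) (hab : G.Adj a b) (hac : G.Adj a c) : ¬ G.Adj b c := by
  classical
  intro hbc
  refine hG.cliqueFreeOn (t := {a, b, c}) ?_ (is3Clique_triple_iff.2 ⟨hab, hac, hbc⟩)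
  simp [Set.insert_subset_iff, ha, hb, hc]

end IsRooted

section Separator

variable {V : Type*} {G : SimpleGraph V} {U D : Set V} {c x y : V}

theorem IsRooted.sdiff (hG : IsRooted G U x y) (hxD : x ∉ D) (hyD : y ∈ D) (hc : c ∈ U \ D)
    (hcx : c ≠ x) (hinner : ((U \ D) \ {x, c}).Nonempty)
    (hsep : ∀ v ∈ (U \ D) \ {x, c}, ∀ d ∈ D, ¬ G.Adj v d) : IsRooted G (U \ D) x c where
  left_mem := ⟨hG.left_mem, hxD⟩
  right_mem := hc
  ne := hcx.symm
  exists_inner := hinner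
  exists_attachment S hS hSne w := by
    obtain ⟨s, hs, v, hv, hvw, hsv⟩ := hG.exists_attachment S (by grind) hSne w
    exact ⟨s, hs, v, ⟨⟨hv.1, fun hvD => hsep s (hS hs) v hvD hsv⟩, hv.2⟩, hvw, hsv⟩
  three_le_degree v hv := by
    refine (hG.three_le_degree v (by grind)).trans (Set.encard_le_encard ?_)
    exact fun u ⟨hu, hvu⟩ => ⟨⟨hu, fun huD => hsep v hv u huD hvu⟩, hvu⟩
  cliqueFreeOn :=
    CliqueFreeOn.subset G (Set.sdiff_subset_sdiff_left Set.sdiff_subset) hG.cliqueFreeOn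

theorem IsRooted.exists_separator_adj (hG : IsRooted G U x y) (hyD : y ∈ D) (hc : c ∈ U \ D)
    (hcx : c ≠ x) (hsep : ∀ v ∈ (U \ D) \ {x, c}, ∀ d ∈ D, ¬ G.Adj v d) :
    ∃ d ∈ D, G.Adj c d := by
  obtain ⟨s, hs, d, hd, hdx, hsd⟩ :=
    hG.exists_attachment ((U \ D) \ {x}) (by grind) ⟨c, hc, hcx⟩ x
  have hdD : d ∈ D := by grind
  have hsc : s = c := by
    by_contra hsc
    exact hsep s (by grind) d hdD hsd
  exact ⟨d, hdD, hsc ▸ hsd⟩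

theorem IsRooted.hasNicePaths_of_nontrivial_commonNeighbors (hG : IsRooted G U x y)
    (ih : ∀ W ⊂ U, ∀ z, IsRooted G W x z → HasNicePaths G W x z)
    (hc : c ∈ U) (hcx : c ≠ x) (hcy : c ≠ y)
    (hB : ((U ∩ G.commonNeighbors x c) \ {y}).Nontrivial) : HasNicePaths G U x y := by
  set B := (U ∩ G.commonNeighbors x c) \ {y}
  set W := U \ insert x (insert c B)
  set D := componentIn G W y
  have hDW : D ⊆ W := componentIn_subset
  have hyD : y ∈ D := self_mem_componentIn ⟨hG.right_mem, by grind [hG.ne]⟩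
  by_cases hex : ∃ p ∈ B, ∃ d ∈ D, G.Adj p d
  · obtain ⟨p, hp, d, hd, hpd⟩ := hex
    obtain ⟨q, hq, hqp⟩ := hB.exists_ne p
    obtain ⟨m, hm⟩ := exists_hasPathOn_componentIn hd
    refine (HasNicePaths.of_commonNeighbors hp.1.2 hq.1.2 hqp.symm hcx.symm hpd hm ?_).mono ?_
    · exact Set.disjoint_left.2 fun v hv hvD => (hDW hvD).2 (by grind)
    · exact Set.union_subset (by grind [hG.left_mem]) fun v hv => (hDW hv).1
  · push Not at hex
    have hsep : ∀ v ∈ (U \ D) \ {x, c}, ∀ d ∈ D, ¬ G.Adj v d := by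
      intro v hv d hd hvd
      have hvB : v ∉ B := fun hvB => hex v hvB d hd hvd
      exact hv.1.2 (mem_componentIn_of_adj hd (by grind) hvd)
    have hxD : x ∉ D := fun h => (hDW h).2 (by grind)
    have hcD : c ∈ U \ D := ⟨hc, fun h => (hDW h).2 (by grind)⟩
    obtain ⟨a, ha⟩ := hB.nonempty
    have hinner : ((U \ D) \ {x, c}).Nonempty :=
      ⟨a, ⟨ha.1.1, fun h => (hDW h).2 (by grind)⟩, by simp [ha.1.2.1.ne.symm, ha.1.2.2.ne.symm]⟩
    obtain ⟨d, hd, hcd⟩ := hG.exists_separator_adj hyD hcD hcx hsep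
    obtain ⟨m, hm⟩ := exists_hasPathOn_componentIn hd
    have hss : U \ D ⊂ U := ⟨Set.sdiff_subset, fun h => (h hG.right_mem).2 hyD⟩
    have hnice := ih _ hss c (hG.sdiff hxD hyD hcD hcx hinner hsep)
    refine (hnice.append (hm.cons hcd hcD.2) (by grind)).mono ?_
    exact Set.union_subset Set.sdiff_subset (Set.insert_subset hc fun v hv => (hDW hv).1)

end Separator

/-- The graph `G` with the edges at `x` replaced by edges from `x` to the neighbours of `N`. If `N`
consists of neighbours of `x`, the new edge `xv` stands for a path `x a v` of `G` with `a ∈ N`. -/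
def rerouteThrough {V : Type*} (G : SimpleGraph V) (x : V) (N : Set V) : SimpleGraph V :=
  G.deleteIncidenceSet x ⊔ SimpleGraph.fromRel fun u v => u = x ∧ ∃ a ∈ N, G.Adj a v

section rerouteThrough

variable {V : Type*} {G : SimpleGraph V} {H N : Set V} {r u v x : V} {n : ℕ}

theorem rerouteThrough_adj_of_ne (hu : u ≠ x) (hv : v ≠ x) :
    (rerouteThrough G x N).Adj u v ↔ G.Adj u v := by
  simp [rerouteThrough, deleteIncidenceSet_adj, hu, hv]

theorem rerouteThrough_adj_left (hv : v ≠ x) :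
    (rerouteThrough G x N).Adj x v ↔ ∃ a ∈ N, G.Adj a v := by
  simp [rerouteThrough, deleteIncidenceSet_adj, hv, hv.symm]

theorem rerouteThrough_adj_of_mem (hx : x ∉ H) (hu : u ∈ H) (hv : v ∈ H) :
    (rerouteThrough G x N).Adj u v ↔ G.Adj u v :=
  rerouteThrough_adj_of_ne (ne_of_mem_of_not_mem hu hx) (ne_of_mem_of_not_mem hv hx)

theorem HasPathOn.of_rerouteThrough (hxH : x ∉ H) (hxr : x ≠ r) (hN : N ⊆ G.neighborSet x)
    (hNH : Disjoint N H) (h : HasPathOn (rerouteThrough G x N) (insert x H) x r n) :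
    HasPathOn G (insert x (N ∪ H)) x r (n + 1) := by
  obtain ⟨v, m, rfl, hxv, htail⟩ := h.exists_adj_of_ne hxr
  rw [Set.insert_sdiff_self_of_notMem hxH] at htail
  obtain ⟨a, haN, hav⟩ :=
    (rerouteThrough_adj_left (ne_of_mem_of_not_mem htail.left_mem hxH)).1 hxv
  have hHpath : HasPathOn G H v r m :=
    htail.transfer fun s hs t ht => (rerouteThrough_adj_of_mem hxH hs ht).1
  have hxa : G.Adj x a := hN haN
  refine ((hHpath.cons hav (hNH.notMem_of_mem_left haN)).cons hxa
    (by simp [hxa.ne, hxH])).mono ?_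
  grind

theorem HasNicePaths.of_rerouteThrough (hxH : x ∉ H) (hxr : x ≠ r) (hN : N ⊆ G.neighborSet x)
    (hNH : Disjoint N H) (h : HasNicePaths (rerouteThrough G x N) (insert x H) x r) :
    HasNicePaths G (insert x (N ∪ H)) x r := by
  obtain ⟨n, hn, h₁, h₂⟩ := h
  exact ⟨n + 1, by omega, h₁.of_rerouteThrough hxH hxr hN hNH,
    h₂.of_rerouteThrough hxH hxr hN hNH⟩

end rerouteThrough

/-- A part `H` of `G[U]` attached to the rest only at `r` and through the set `N` of neighbours of
`x`. Its vertices have at most one neighbour in `N` each, so that merging these neighbours into `x`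
does not lower degrees. -/
structure IsLobe {V : Type*} (G : SimpleGraph V) (U : Set V) (x y : V) (N H : Set V) (r : V) :
    Prop where
  subset : H ⊆ U
  subset_neighborSet : N ⊆ G.neighborSet x
  disjoint : Disjoint N H
  left_notMem : x ∉ H
  root_mem : r ∈ H
  exists_ne : ∃ h ∈ H, h ≠ r
  right_notMem : y ∉ H \ {r}
  exists_path : ∀ h ∈ H, ∃ n, HasPathOn G H h r n
  inter_neighborSet_subset : ∀ h ∈ H \ {r}, U ∩ G.neighborSet h ⊆ H ∪ N
  subsingleton : ∀ h ∈ H \ {r}, (N ∩ G.neighborSet h).Subsingleton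

namespace IsLobe

variable {V : Type*} {G : SimpleGraph V} {U N H : Set V} {r v x y : V}

theorem left_ne (hL : IsLobe G U x y N H r) : x ≠ r :=
  (ne_of_mem_of_not_mem hL.root_mem hL.left_notMem).symm

theorem encard_inter_neighborSet_le (hL : IsLobe G U x y N H r) (hv : v ∈ H \ {r}) :
    (U ∩ G.neighborSet v).encard ≤
      (insert x H ∩ (rerouteThrough G x N).neighborSet v).encard := by
  classical
  have hvx : v ≠ x := ne_of_mem_of_not_mem hv.1 hL.left_notMem
  have hN : ∀ u ∈ U ∩ G.neighborSet v, u ∉ H → u ∈ N ∩ G.neighborSet v := fun u hu huH =>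
    ⟨(hL.inter_neighborSet_subset v hv hu).resolve_left huH, hu.2⟩
  refine Set.encard_le_encard_of_injOn (f := fun u => if u ∈ H then u else x) ?_ ?_
  · intro u hu
    by_cases huH : u ∈ H
    · simpa [huH, rerouteThrough_adj_of_mem hL.left_notMem hv.1 huH] using hu.2
    · obtain ⟨huN, hvu⟩ := hN u hu huH
      simpa [huH, adj_comm _ v x, rerouteThrough_adj_left hvx] using ⟨u, huN, hvu.symm⟩
  · intro u hu w hw huw
    have hx := hL.left_notMem
    by_cases huH : u ∈ H <;> by_cases hwH : w ∈ H <;> simp only [huH, hwH, if_true, if_false] at huw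
    · exact huw
    · exact absurd (huw ▸ huH) hx
    · exact absurd (huw ▸ hwH) hx
    · exact hL.subsingleton v hv (hN u hu huH) (hN w hw hwH)

theorem exists_attachment_rerouteThrough (hL : IsLobe G U x y N H r) (hG : IsRooted G U x y)
    {S : Set V} (hS : S ⊆ H \ {r}) (hSne : S.Nonempty) (w : V) :
    ∃ s ∈ S, ∃ v ∈ insert x H \ S, v ≠ w ∧ (rerouteThrough G x N).Adj s v := by
  have hx := hL.left_notMem
  have hxS : x ∉ S := fun h => hx (hS h).1
  have hadj : ∀ s ∈ S, ∀ v ∈ H, (rerouteThrough G x N).Adj s v ↔ G.Adj s v :=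
    fun s hs v hv => rerouteThrough_adj_of_mem hx (hS hs).1 hv
  by_cases hSN : ∃ s ∈ S, ∃ a ∈ N, G.Adj s a
  · obtain ⟨s, hs, a, haN, hsa⟩ := hSN
    by_cases hxw : x = w
    · obtain ⟨n, hn⟩ := hL.exists_path s (hS hs).1
      obtain ⟨u, hu, v, hv, huv⟩ := hn.exists_adj_of_mem_of_notMem hs fun h => (hS h).2 rfl
      exact ⟨u, hu, v, ⟨Or.inr hv.1, hv.2⟩, hxw ▸ ne_of_mem_of_not_mem hv.1 hx,
        (hadj u hu v hv.1).2 huv⟩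
    · exact ⟨s, hs, x, ⟨Or.inl rfl, hxS⟩, hxw,
        ((rerouteThrough_adj_left (ne_of_mem_of_not_mem hs hxS)).2 ⟨a, haN, hsa.symm⟩).symm⟩
  · push Not at hSN
    have hSU : S ⊆ U \ {x, y} := fun s hs =>
      ⟨hL.subset (hS hs).1, by grind [hL.right_notMem]⟩
    obtain ⟨s, hs, v, hv, hvw, hsv⟩ := hG.exists_attachment S hSU hSne w
    have hvH : v ∈ H :=
      (hL.inter_neighborSet_subset s (hS hs) ⟨hv.1, hsv⟩).resolve_right fun hvN =>
        hSN s hs v hvN hsv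
    exact ⟨s, hs, v, ⟨Or.inr hvH, hv.2⟩, hvw, (hadj s hs v hvH).2 hsv⟩

theorem cliqueFreeOn_rerouteThrough (hL : IsLobe G U x y N H r) {k : ℕ}
    (hG : G.CliqueFreeOn (U \ {x}) k) : (rerouteThrough G x N).CliqueFreeOn H k := by
  intro t ht hclique
  refine hG (fun v hv => ⟨hL.subset (ht hv), ne_of_mem_of_not_mem (ht hv) hL.left_notMem⟩)
    ⟨fun u hu v hv huv => ?_, hclique.card_eq⟩
  exact (rerouteThrough_adj_of_mem hL.left_notMem (ht hu) (ht hv)).1 (hclique.isClique hu hv huv)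

theorem isRooted_rerouteThrough (hL : IsLobe G U x y N H r) (hG : IsRooted G U x y) :
    IsRooted (rerouteThrough G x N) (insert x H) x r := by
  have hsdiff : insert x H \ {x} = H := Set.insert_sdiff_self_of_notMem hL.left_notMem
  have hsdiff₂ : insert x H \ {x, r} = H \ {r} := by
    rw [Set.insert_eq x {r}, ← Set.sdiff_sdiff, hsdiff]
  exact
    { left_mem := Or.inl rfl
      right_mem := Or.inr hL.root_mem
      ne := hL.left_ne
      exists_inner := by
        rw [hsdiff₂]
        exact hL.exists_ne
      exists_attachment := by
        rw [hsdiff₂]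
        exact fun S hS hSne w => hL.exists_attachment_rerouteThrough hG hS hSne w
      three_le_degree := by
        rw [hsdiff₂]
        refine fun v hv => (hG.three_le_degree v ⟨hL.subset hv.1, ?_⟩).trans
          (hL.encard_inter_neighborSet_le hv)
        grind [hL.right_notMem, hL.left_notMem]
      cliqueFreeOn := by
        rw [hsdiff]
        exact hL.cliqueFreeOn_rerouteThrough hG.cliqueFreeOn }

end IsLobe

/-- The vertices of `U` outside `P` and outside the closed neighbourhood of `x`. -/
def farSet {V : Type*} (G : SimpleGraph V) (U : Set V) (x : V) (P : Set V) : Set V :=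
  {v ∈ U | v ≠ x ∧ ¬ G.Adj x v ∧ v ∉ P}

/-- `P` carries a path from `r` to `y`, and `r` is the only vertex of `P` with neighbours in
`farSet G U x P`. Nice `(x,r)`-paths avoiding `P \ {r}` extend along `P` to nice `(x,y)`-paths. -/
structure IsTail {V : Type*} (G : SimpleGraph V) (U : Set V) (x y : V) (P : Set V) (r : V) :
    Prop where
  subset : P ⊆ U \ {x}
  exists_path : ∃ m, HasPathOn G P r y m
  exists_adj : ∃ c ∈ farSet G U x P, G.Adj r c
  eq_of_adj : ∀ h ∈ farSet G U x P, ∀ t ∈ P, G.Adj t h → t = r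

section Tail

variable {V : Type*} {G : SimpleGraph V} {U P : Set V} {r x y : V}

theorem IsRooted.exists_isTail (hG : IsRooted G U x y)
    (huniq : ∀ c ∈ U, c ≠ x → c ≠ y → ((U ∩ G.commonNeighbors x c) \ {y}).Subsingleton) :
    ∃ P r, IsTail G U x y P r := by
  have hy : y ∈ U \ {x} := ⟨hG.right_mem, hG.ne.symm⟩
  have hPy : HasPathOn G {y} y y 0 := .refl rfl
  by_cases hyfar : ∃ h ∈ farSet G U x {y}, G.Adj y h
  · exact ⟨{y}, y, by simpa using hy, ⟨0, hPy⟩, hyfar, fun _ _ _ ht _ => ht⟩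
  push Not at hyfar
  obtain ⟨a, haU, hax, hya⟩ := hG.exists_right_adj
  have hay : a ≠ y := hya.ne.symm
  have hPa : HasPathOn G {a, y} a y 1 := hPy.cons hya.symm hay
  have hxa : G.Adj x a := by
    by_contra hxa
    exact hyfar a ⟨haU, hax, hxa, hay⟩ hya
  by_cases hafar : ∃ h ∈ farSet G U x {a, y}, G.Adj a h
  · refine ⟨{a, y}, a, by grind, ⟨1, hPa⟩, hafar, ?_⟩
    rintro h ⟨hhU, hhx, hxh, hhP⟩ t (rfl | rfl) hth
    · rfl
    · exact absurd hth (hyfar h ⟨hhU, hhx, hxh, by grind⟩)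
  push Not at hafar
  obtain ⟨b, hbU, hab, hbx, hby⟩ := hG.exists_adj_ne_ne haU hax hay x y
  have hxb : G.Adj x b := by
    by_contra hxb
    exact hafar b ⟨hbU, hbx, hxb, by simp [hab.ne.symm, hby]⟩ hab
  obtain ⟨c, hcU, hbc, hcx, hca⟩ := hG.exists_adj_ne_ne hbU hbx hby x a
  have hcy : c ≠ y := by
    rintro rfl
    exact hG.not_adj_of_adj_of_adj ⟨haU, hax⟩ ⟨hbU, hbx⟩ hy hab hya.symm hbc
  have hxc : ¬ G.Adj x c := fun hxc =>
    hca (huniq b hbU hbx hby ⟨⟨hcU, hxc, hbc⟩, hcy⟩ ⟨⟨haU, hxa, hab.symm⟩, hay⟩)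
  have hPb : HasPathOn G {b, a, y} b y 2 := hPa.cons hab.symm (by simp [hab.ne.symm, hby])
  refine ⟨{b, a, y}, b, by grind, ⟨2, hPb⟩,
    ⟨c, ⟨hcU, hcx, hxc, by simp [hbc.ne.symm, hca, hcy]⟩, hbc⟩, ?_⟩
  rintro h ⟨hhU, hhx, hxh, hhP⟩ t (rfl | rfl | rfl) hth
  · rfl
  · exact absurd hth (hafar h ⟨hhU, hhx, hxh, by grind⟩)
  · exact absurd hth (hyfar h ⟨hhU, hhx, hxh, by grind⟩)

theorem IsTail.root_mem (hT : IsTail G U x y P r) : r ∈ P :=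
  hT.exists_path.choose_spec.left_mem

theorem IsTail.right_mem (hT : IsTail G U x y P r) : y ∈ P :=
  hT.exists_path.choose_spec.right_mem

theorem IsTail.isLobe_componentIn (hT : IsTail G U x y P r)
    (huniq : ∀ c ∈ U, c ≠ x → c ≠ y → ((U ∩ G.commonNeighbors x c) \ {y}).Subsingleton) :
    IsLobe G U x y ((U ∩ G.neighborSet x) \ P) (componentIn G (insert r (farSet G U x P)) r) r := by
  have hr := hT.root_mem
  have hrUx := hT.subset hr
  set W := insert r (farSet G U x P)
  set H := componentIn G W r
  have hHW : H ⊆ W := componentIn_subset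
  have hrH : r ∈ H := self_mem_componentIn (Or.inl rfl)
  have hfar : ∀ h ∈ H \ {r}, h ∈ farSet G U x P := fun h hh => (hHW hh.1).resolve_left hh.2
  have hne : ∀ h ∈ H \ {r}, h ≠ y := fun h hh hhy => (hfar h hh).2.2.2 (hhy ▸ hT.right_mem)
  obtain ⟨c, hc, hrc⟩ := hT.exists_adj
  exact
    { subset := hHW.trans (Set.insert_subset hrUx.1 fun v hv => hv.1)
      subset_neighborSet := fun v hv => hv.1.2
      disjoint := Set.disjoint_left.2 fun v hv hvH =>
        (hfar v ⟨hvH, fun hvr => hv.2 (hvr ▸ hr)⟩).2.2.1 hv.1.2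
      left_notMem := fun hxH => (hfar x ⟨hxH, Ne.symm hrUx.2⟩).2.1 rfl
      root_mem := hrH
      exists_ne := ⟨c, mem_componentIn_of_adj hrH (Or.inr hc) hrc.symm, hrc.ne.symm⟩
      right_notMem := fun hy => hne y hy rfl
      exists_path := fun h hh => exists_hasPathOn_componentIn hh
      inter_neighborSet_subset := by
        rintro h hh v ⟨hvU, hhv⟩
        have hh_far := hfar h hh
        have hvx : v ≠ x := fun hvx => hh_far.2.2.1 (hvx ▸ hhv.symm)
        by_cases hvP : v ∈ P
        · exact Or.inl (hT.eq_of_adj h hh_far v hvP hhv.symm ▸ hrH)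
        by_cases hxv : G.Adj x v
        · exact Or.inr ⟨⟨hvU, hxv⟩, hvP⟩
        · exact Or.inl (mem_componentIn_of_adj hh.1 (Or.inr ⟨hvU, hvx, hxv, hvP⟩) hhv.symm)
      subsingleton := by
        intro h hh
        refine (huniq h (hfar h hh).1 (hfar h hh).2.1 (hne h hh)).anti ?_
        rintro v ⟨⟨⟨hvU, hxv⟩, hvP⟩, hhv⟩
        exact ⟨⟨hvU, hxv, hhv⟩, fun hvy => hvP (hvy ▸ hT.right_mem)⟩ }

theorem IsTail.insert_componentIn_ssubset (hT : IsTail G U x y P r) (hG : IsRooted G U x y) :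
    insert x (componentIn G (insert r (farSet G U x P)) r) ⊂ U := by
  have hHW : componentIn G (insert r (farSet G U x P)) r ⊆ insert r (farSet G U x P) :=
    componentIn_subset
  have hrU := (hT.subset hT.root_mem).1
  refine ⟨Set.insert_subset hG.left_mem (hHW.trans (Set.insert_subset hrU fun v hv => hv.1)),
    fun hU => ?_⟩
  have hroot : ∀ v ∈ U, v ≠ x → v ∉ farSet G U x P → v = r := fun v hv hvx hvfar =>
    (hHW ((hU hv).resolve_left hvx)).resolve_right hvfar
  obtain ⟨s, hsU, hsy, hxs⟩ := hG.exists_left_adj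
  have hsr : s = r := hroot s hsU hxs.ne.symm fun h => h.2.2.1 hxs
  have hyr : y = r := hroot y hG.right_mem hG.ne.symm fun h => h.2.2.2 hT.right_mem
  exact hsy (hsr.trans hyr.symm)

theorem IsRooted.hasNicePaths_of_subsingleton_commonNeighbors (hG : IsRooted G U x y)
    (ih : ∀ W ⊂ U, ∀ G' : SimpleGraph V, ∀ z, IsRooted G' W x z → HasNicePaths G' W x z)
    (huniq : ∀ c ∈ U, c ≠ x → c ≠ y → ((U ∩ G.commonNeighbors x c) \ {y}).Subsingleton) :
    HasNicePaths G U x y := by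
  obtain ⟨P, r, hT⟩ := hG.exists_isTail huniq
  obtain ⟨m, hP⟩ := hT.exists_path
  have hL := hT.isLobe_componentIn huniq
  set H := componentIn G (insert r (farSet G U x P)) r
  have hHP : ∀ v ∈ H, v ∈ P → v = r := fun v hvH hvP =>
    (componentIn_subset hvH).resolve_right fun hv => hv.2.2.2 hvP
  have hnice := (ih _ (hT.insert_componentIn_ssubset hG) _ r
    (hL.isRooted_rerouteThrough hG)).of_rerouteThrough hL.left_notMem hL.left_ne
      hL.subset_neighborSet hL.disjoint
  refine (hnice.append hP ?_).mono ?_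
  · rintro v ⟨rfl | hv | hv, hvP⟩
    · exact absurd rfl (hT.subset hvP).2
    · exact absurd hvP hv.2
    · exact hHP v hv hvP
  · have := hL.subset
    have := hT.subset
    grind [hG.left_mem]

end Tail

theorem IsRooted.hasNicePaths {V : Type*} {G : SimpleGraph V} {U : Set V} {x y : V}
    (hU : U.Finite) (hG : IsRooted G U x y) : HasNicePaths G U x y := by
  induction hn : U.ncard using Nat.strong_induction_on generalizing U G y with
  | _ n ih =>
    have ih' : ∀ W ⊂ U, ∀ G' : SimpleGraph V, ∀ z, IsRooted G' W x z → HasNicePaths G' W x z :=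
      fun W hW G' z hG' => ih _ (hn ▸ Set.ncard_lt_ncard hW hU) (hU.subset hW.subset) hG' rfl
    by_cases huniq : ∀ c ∈ U, c ≠ x → c ≠ y → ((U ∩ G.commonNeighbors x c) \ {y}).Subsingleton
    · exact hG.hasNicePaths_of_subsingleton_commonNeighbors ih' huniq
    · push Not at huniq
      obtain ⟨c, hc, hcx, hcy, hB⟩ := huniq
      exact hG.hasNicePaths_of_nontrivial_commonNeighbors (fun W hW => ih' W hW G) hc hcx hcy hB

section KConnected

variable {V : Type*} {G : SimpleGraph V} {x y : V}

theorem KConnected.exists_adj_of_ncard_lt {k : ℕ} (hG : KConnected G k) {S T : Set V}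
    (hT : T.Finite) (hTk : T.ncard < k) (hS : (S \ T).Nonempty) (hS' : (Sᶜ \ T).Nonempty) :
    ∃ s ∈ S \ T, ∃ v ∈ Sᶜ \ T, G.Adj s v := by
  obtain ⟨s, hs, hsT⟩ := hS
  obtain ⟨v, hv, hvT⟩ := hS'
  obtain ⟨p⟩ := (hG.2 T hT hTk).preconnected ⟨s, hsT⟩ ⟨v, hvT⟩
  obtain ⟨d, -, hd, hd'⟩ := p.exists_boundary_dart (Subtype.val ⁻¹' S) hs hv
  exact ⟨d.fst, ⟨hd, d.fst.2⟩, d.snd, ⟨hd', d.snd.2⟩, d.adj⟩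

theorem addEdge_adj_of_ne {u v : V} (hux : u ≠ x) (huy : u ≠ y) :
    (AddEdge G x y).Adj u v ↔ G.Adj u v := by
  simp [AddEdge, hux, huy]

theorem exists_attachment_of_kConnected_addEdge (h2 : KConnected (AddEdge G x y) 2) (hxy : x ≠ y)
    {S : Set V} (hx : x ∉ S) (hy : y ∉ S) (hS : S.Nonempty) (w : V) :
    ∃ s ∈ S, ∃ v ∉ S, v ≠ w ∧ G.Adj s v := by
  have hfin : ({w} \ S).Finite := (Set.finite_singleton w).sdiff
  have hcard : ({w} \ S).ncard < 2 :=
    (Set.ncard_le_ncard Set.sdiff_subset (Set.finite_singleton w)).trans_lt (by simp)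
  obtain ⟨s₀, hs₀⟩ := hS
  obtain ⟨z, hz, hzw⟩ : ∃ z ∈ ({x, y} : Set V), z ≠ w := (Set.nontrivial_pair hxy).exists_ne w
  obtain ⟨s, hs, v, hv, hsv⟩ := h2.exists_adj_of_ncard_lt (S := S) hfin hcard
    ⟨s₀, hs₀, fun h => h.2 hs₀⟩ ⟨z, by grind, by grind⟩
  refine ⟨s, hs.1, v, hv.1, by grind, (addEdge_adj_of_ne ?_ ?_).1 hsv⟩ <;> grind

theorem isRooted_univ (hxy : x ≠ y) (h2 : KConnected (AddEdge G x y) 2)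
    (hdeg : ∀ v, v ≠ x → v ≠ y → 3 ≤ (G.neighborSet v).encard)
    (htf : (G.induce {v | v ≠ x}).CliqueFree 3) : IsRooted G Set.univ x y where
  left_mem := Set.mem_univ x
  right_mem := Set.mem_univ y
  ne := hxy
  exists_inner := by
    have hlt : ({x, y} : Set V).ncard < (Set.univ : Set V).ncard := by
      rw [Set.ncard_pair hxy, Set.ncard_univ]
      exact h2.1
    exact Set.exists_mem_notMem_of_ncard_lt_ncard hlt
  exists_attachment S hS hSne w := by
    obtain ⟨s, hs, v, hv, hvw, hsv⟩ := exists_attachment_of_kConnected_addEdge h2 hxy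
      (fun h => (hS h).2 (by simp)) (fun h => (hS h).2 (by simp)) hSne w
    exact ⟨s, hs, v, ⟨Set.mem_univ v, hv⟩, hvw, hsv⟩
  three_le_degree v hv := by
    rw [Set.univ_inter]
    exact hdeg v (fun h => hv.2 (Or.inl h)) fun h => hv.2 (Or.inr h)
  cliqueFreeOn := by
    rw [← Set.compl_eq_univ_sdiff]
    exact (cliqueFree_induce_iff _ _ _).1 htf

end KConnected

/-- Lemma 4: if `G + xy` is 2-connected, every vertex other than `x, y` has degree at
least 3, and `G - x` is triangle-free, then `G` has two nice `(x,y)`-paths, i.e. two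
`(x,y)`-paths whose lengths differ by exactly 2 and are both at least 2. -/
theorem two_nice_paths {V : Type*} [Fintype V] (G : SimpleGraph V) (x y : V) (hxy : x ≠ y)
    (h2 : KConnected (AddEdge G x y) 2)
    (hdeg : ∀ v, v ≠ x → v ≠ y → 3 ≤ (G.neighborSet v).ncard)
    (htf : (G.induce {v | v ≠ x}).CliqueFree 3) :
    ∃ (P1 P2 : G.Walk x y), P1.IsPath ∧ P2.IsPath ∧
      2 ≤ P2.length ∧ P1.length = P2.length + 2 := by
  have hdeg' : ∀ v, v ≠ x → v ≠ y → 3 ≤ (G.neighborSet v).encard := fun v hvx hvy => by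
    rw [← (Set.toFinite (G.neighborSet v)).cast_ncard_eq]
    exact_mod_cast hdeg v hvx hvy
  obtain ⟨n, hn, ⟨P₂, hP₂, hlen₂, -⟩, ⟨P₁, hP₁, hlen₁, -⟩⟩ :=
    (isRooted_univ hxy h2 hdeg' htf).hasNicePaths Set.finite_univ
  exact ⟨P₁, P₂, hP₁, hP₂, by omega, by omega⟩
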